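/- arXiv:1307.6708 — 2 statements merged into one kernel-verified Lean document; each statement's English description precedes it below -/
import Mathlib

section
/- For every integer d > 0 there exists a finite connected simple graph G with no isolated vertices such that dim(P(G)) = d and the edge polytope P(G) has more than 4^{⌊d/3⌋} facets. -/
open Set

/-- The edge polytope of a graph `G` on the vertex set `Fin n`. -/
def edgePolytope {n : ℕ} (G : SimpleGraph (Fin n)) : Set (Fin n → ℝ) :=
  convexHull ℝ {x | ∃ i j : Fin n, G.Adj i j ∧ x = Pi.single i 1 + Pi.single j 1}

/-- The dimension of a polytope: the dimension of its affine hull. -/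
noncomputable def polyDim {n : ℕ} (P : Set (Fin n → ℝ)) : ℕ :=
  Module.finrank ℝ (vectorSpan ℝ P)

/-- `faceCount P k` is the number of (nonempty) `k`-dimensional faces of `P`,
a face being the intersection of `P` with a supporting hyperplane (`IsExposed`). -/
noncomputable def faceCount {n : ℕ} (P : Set (Fin n → ℝ)) (k : ℕ) : ℕ :=
  {F : Set (Fin n → ℝ) | IsExposed ℝ P F ∧ F.Nonempty ∧ polyDim F = k}.ncard

/-!
Let `G` be the cone over a graph `H` with `d` vertices. A vertex weight `w` that is nonnegative on
all edges `{i, j}`, in the sense that `0 ≤ w i + w j`, cuts out a face of the edge polytope, and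
this face is a facet as soon as every weight vanishing on the same edges as `w` is proportional to
`w`. An independent set `T` of `H` yields such a weight: `1` on the apex and on the neighbours of
`T`, `-1` on `T`, and `0` on the remaining vertices. A weight vanishing on the same edges is
determined by its value at the apex, provided each remaining vertex lies on an odd closed walk
among the remaining vertices, since along a walk it alternates in sign. If `H` contains `k` disjoint
triangles, then each triangle can be met by `T` in any one of its vertices or not at all, which
gives `4 ^ k` facets; the face spanned by the edges at the apex is one more.

With `k = d / 3` this settles `3 ≤ d`; for smaller `d` a star will do, its edge polytope
being a simplex.
-/

section LinearAlgebra

variable {K V : Type*} [Field K] [AddCommGroup V] [Module K V]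

lemma finrank_inf_ker_add_one {U : Submodule K V} [FiniteDimensional K U] {φ : Module.Dual K V}
    (hφ : ¬ U ≤ LinearMap.ker φ) :
    Module.finrank K ↥(U ⊓ LinearMap.ker φ) + 1 = Module.finrank K U := by
  have hne : φ.domRestrict U ≠ 0 := fun h => hφ fun x hx =>
    (DFunLike.congr_fun h ⟨x, hx⟩ :)
  rw [← Module.Dual.finrank_ker_add_one_of_ne_zero hne, LinearMap.ker_domRestrict,
    ← Submodule.finrank_map_subtype_eq, Submodule.map_comap_subtype]

lemma vectorSpan_eq_span_inf_ker {s : Set V} {φ : Module.Dual K V} {c : K} (hc : c ≠ 0)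
    (hφ : ∀ x ∈ s, φ x = c) : vectorSpan K s = Submodule.span K s ⊓ LinearMap.ker φ := by
  apply le_antisymm
  · rw [vectorSpan_def, Submodule.span_le]
    rintro _ ⟨x, hx, y, hy, rfl⟩
    exact ⟨sub_mem (Submodule.subset_span hx) (Submodule.subset_span hy), by
      simp [hφ x hx, hφ y hy]⟩
  · rintro x ⟨hx, hx0 : φ x = 0⟩
    obtain rfl | ⟨p, hp⟩ := s.eq_empty_or_nonempty
    · simpa using hx
    have hproj : ∀ z ∈ Submodule.span K s, z - (φ z / c) • p ∈ vectorSpan K s := fun z hz => by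
      induction hz using Submodule.span_induction with
      | mem z hz => simpa [hφ z hz, hc] using vsub_mem_vectorSpan K hz hp
      | zero => simp
      | add z z' _ _ h h' => convert add_mem h h' using 1; rw [map_add]; module
      | smul a z _ h =>
        convert (vectorSpan K s).smul_mem a h using 1; rw [map_smul, smul_eq_mul]; module
    simpa [hx0] using hproj x hx

lemma finrank_vectorSpan_add_one {s : Set V} [FiniteDimensional K (Submodule.span K s)]
    (hs : s.Nonempty) {φ : Module.Dual K V} {c : K} (hc : c ≠ 0) (hφ : ∀ x ∈ s, φ x = c) :
    Module.finrank K (vectorSpan K s) + 1 = Module.finrank K (Submodule.span K s) := by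
  rw [vectorSpan_eq_span_inf_ker hc hφ]
  obtain ⟨p, hp⟩ := hs
  exact finrank_inf_ker_add_one fun h => hc <| (hφ p hp).symm.trans (h (Submodule.subset_span hp))

lemma finrank_span_add_one_of_forall_dual {s t : Set V}
    [FiniteDimensional K (Submodule.span K t)] (hst : s ⊆ Submodule.span K t)
    {φ : Module.Dual K V} (hs : ∀ x ∈ s, φ x = 0) (ht : ∃ x ∈ t, φ x ≠ 0)
    (h : ∀ ψ : Module.Dual K V, (∀ x ∈ s, ψ x = 0) → ∃ a : K, ∀ x ∈ t, ψ x = a * φ x) :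
    Module.finrank K (Submodule.span K s) + 1 = Module.finrank K (Submodule.span K t) := by
  have hspan : Submodule.span K s = Submodule.span K t ⊓ LinearMap.ker φ := by
    refine le_antisymm (le_inf (Submodule.span_le.2 hst) (Submodule.span_le.2 hs)) ?_
    rintro x ⟨hx, hx0 : φ x = 0⟩
    by_contra hxs
    obtain ⟨ψ, hψx, hψ⟩ := Submodule.exists_le_ker_of_notMem hxs
    obtain ⟨a, ha⟩ := h ψ fun y hy => hψ (Submodule.subset_span hy)
    have hψφ : ψ x = (a • φ) x := LinearMap.eqOn_span (f := ψ) (g := a • φ) ha hx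
    exact hψx (by simp [hψφ, hx0])
  obtain ⟨p, hp, hp0⟩ := ht
  rw [hspan]
  exact finrank_inf_ker_add_one fun hle => hp0 (hle (Submodule.subset_span hp))

end LinearAlgebra

/-- By the Krein–Milman theorem a face is determined by its extreme points, which lie in `S`. -/
lemma finite_isExposed_convexHull {E : Type*} [AddCommGroup E] [Module ℝ E] [TopologicalSpace E]
    [T2Space E] [IsTopologicalAddGroup E] [ContinuousSMul ℝ E] [LocallyConvexSpace ℝ E]
    {S : Set E} (hS : S.Finite) : {F | IsExposed ℝ (convexHull ℝ S) F}.Finite := by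
  refine Set.Finite.of_finite_image (f := fun F => F.extremePoints ℝ)
    (hS.finite_subsets.subset ?_) ?_
  · rintro _ ⟨F, hF, rfl⟩
    exact hF.isExtreme.extremePoints_subset_extremePoints.trans extremePoints_convexHull_subset
  · have hull : ∀ F, IsExposed ℝ (convexHull ℝ S) F →
        closure (convexHull ℝ (F.extremePoints ℝ)) = F := fun F hF =>
      closure_convexHull_extremePoints (hF.isCompact (hS.isCompact_convexHull ℝ))
        (hF.convex (convex_convexHull ℝ S))
    intro F hF F' hF' h
    rw [← hull F hF, ← hull F' hF']
    exact congrArg (fun T => closure (convexHull ℝ T)) h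

section EdgePolytope

variable {n : ℕ} {G : SimpleGraph (Fin n)} {w x : Fin n → ℝ} {i j : Fin n}

/-- The generators `eᵢ + eⱼ` of the edge polytope. -/
def edgeVectors (G : SimpleGraph (Fin n)) : Set (Fin n → ℝ) :=
  {x | ∃ i j : Fin n, G.Adj i j ∧ x = Pi.single i 1 + Pi.single j 1}

lemma finite_edgeVectors (G : SimpleGraph (Fin n)) : (edgeVectors G).Finite := by
  refine (Set.finite_range
    fun p : Fin n × Fin n => (Pi.single p.1 1 + Pi.single p.2 1 : Fin n → ℝ)).subset ?_
  rintro _ ⟨i, j, -, rfl⟩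
  exact ⟨(i, j), rfl⟩

lemma dotProduct_single_add_single (w : Fin n → ℝ) (i j : Fin n) :
    w ⬝ᵥ (Pi.single i 1 + Pi.single j 1) = w i + w j := by
  simp [dotProduct_add]

lemma one_dotProduct_of_mem_edgeVectors (hx : x ∈ edgeVectors G) : 1 ⬝ᵥ x = 2 := by
  obtain ⟨i, j, -, rfl⟩ := hx
  norm_num [dotProduct_single_add_single]

lemma single_add_single_mem_edgePolytope (h : G.Adj i j) :
    Pi.single i 1 + Pi.single j 1 ∈ edgePolytope G :=
  subset_convexHull ℝ _ ⟨i, j, h, rfl⟩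

lemma edgePolytope_subset_span : edgePolytope G ⊆ Submodule.span ℝ (edgeVectors G) :=
  convexHull_min Submodule.subset_span (Submodule.span ℝ (edgeVectors G)).convex

lemma one_dotProduct_of_mem_edgePolytope (hx : x ∈ edgePolytope G) : 1 ⬝ᵥ x = 2 :=
  convexHull_min (fun _ => one_dotProduct_of_mem_edgeVectors)
    (convex_hyperplane (dotProductEquiv ℝ (Fin n) 1).isLinear 2) hx

lemma dotProduct_nonneg_of_mem_edgePolytope (hw : ∀ i j, G.Adj i j → 0 ≤ w i + w j)
    (hx : x ∈ edgePolytope G) : 0 ≤ w ⬝ᵥ x := by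
  refine convexHull_min ?_ (convex_halfSpace_ge (dotProductEquiv ℝ (Fin n) w).isLinear 0) hx
  rintro _ ⟨i, j, hij, rfl⟩
  exact (hw i j hij).trans_eq (dotProduct_single_add_single w i j).symm

lemma polyDim_add_one_of_subset_edgePolytope {F : Set (Fin n → ℝ)} (hF : F.Nonempty)
    (hFG : F ⊆ edgePolytope G) :
    polyDim F + 1 = Module.finrank ℝ (Submodule.span ℝ F) :=
  finrank_vectorSpan_add_one hF (φ := dotProductEquiv ℝ (Fin n) 1) two_ne_zero
    fun _ hx => one_dotProduct_of_mem_edgePolytope (hFG hx)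

lemma polyDim_edgePolytope_add_one (h : G.Adj i j) :
    polyDim (edgePolytope G) + 1 = Module.finrank ℝ (Submodule.span ℝ (edgeVectors G)) := by
  rw [polyDim_add_one_of_subset_edgePolytope ⟨_, single_add_single_mem_edgePolytope h⟩ subset_rfl,
    le_antisymm (Submodule.span_le.2 edgePolytope_subset_span)
      (Submodule.span_mono (subset_convexHull ℝ _))]

/-- The face of the edge polytope cut out by a vertex weight `w`, read as the linear form `w ⬝ᵥ ·`,
whose value at the edge `{i, j}` is `w i + w j`. -/
def weightFace (G : SimpleGraph (Fin n)) (w : Fin n → ℝ) : Set (Fin n → ℝ) :=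
  {x ∈ edgePolytope G | w ⬝ᵥ x = 0}

lemma single_add_single_mem_weightFace_iff (h : G.Adj i j) :
    Pi.single i 1 + Pi.single j 1 ∈ weightFace G w ↔ w i + w j = 0 := by
  rw [← dotProduct_single_add_single]
  exact and_iff_right (single_add_single_mem_edgePolytope h)

lemma isExposed_weightFace (hw : ∀ i j, G.Adj i j → 0 ≤ w i + w j) :
    IsExposed ℝ (edgePolytope G) (weightFace G w) := by
  rintro ⟨p, hp, hp0⟩
  refine ⟨LinearMap.toContinuousLinearMap (dotProductEquiv ℝ (Fin n) (-w)), ?_⟩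
  ext x
  simp only [weightFace, mem_ofPred_eq, LinearMap.coe_toContinuousLinearMap',
    dotProductEquiv_apply_apply, neg_dotProduct, neg_le_neg_iff]
  refine and_congr_right fun hx => ⟨fun hx0 y hy => ?_, fun hmin => ?_⟩
  · exact hx0.trans_le (dotProduct_nonneg_of_mem_edgePolytope hw hy)
  · exact le_antisymm (hp0 ▸ hmin p hp) (dotProduct_nonneg_of_mem_edgePolytope hw hx)

/-- A vertex weight defining a facet of the edge polytope: it is nonnegative on the edges, vanishes
on some but not all of them, and as a function on edges is determined up to scaling by the edges on
which it vanishes. -/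
structure IsFacetWeight (G : SimpleGraph (Fin n)) (w : Fin n → ℝ) : Prop where
  nonneg : ∀ i j, G.Adj i j → 0 ≤ w i + w j
  exists_eq_zero : ∃ i j, G.Adj i j ∧ w i + w j = 0
  exists_ne_zero : ∃ i j, G.Adj i j ∧ w i + w j ≠ 0
  proportional : ∀ y : Fin n → ℝ, (∀ i j, G.Adj i j → w i + w j = 0 → y i + y j = 0) →
    ∃ a : ℝ, ∀ i j, G.Adj i j → y i + y j = a * (w i + w j)

lemma IsFacetWeight.nonempty_weightFace (hw : IsFacetWeight G w) : (weightFace G w).Nonempty := by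
  obtain ⟨i, j, hij, h0⟩ := hw.exists_eq_zero
  exact ⟨_, (single_add_single_mem_weightFace_iff hij).2 h0⟩

lemma IsFacetWeight.polyDim_weightFace_add_one (hw : IsFacetWeight G w) :
    polyDim (weightFace G w) + 1 = polyDim (edgePolytope G) := by
  have hsub : weightFace G w ⊆ edgePolytope G := sep_subset _ _
  obtain ⟨i, j, hij, hne⟩ := hw.exists_ne_zero
  refine Nat.succ_injective ?_
  rw [Nat.succ_eq_add_one, polyDim_add_one_of_subset_edgePolytope hw.nonempty_weightFace hsub,
    Nat.succ_eq_add_one, polyDim_edgePolytope_add_one hij]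
  refine finrank_span_add_one_of_forall_dual (φ := dotProductEquiv ℝ (Fin n) w)
    (hsub.trans edgePolytope_subset_span) (fun x hx => hx.2)
    ⟨_, ⟨i, j, hij, rfl⟩, by simpa [dotProduct_single_add_single] using hne⟩ fun ψ hψ => ?_
  obtain ⟨y, rfl⟩ := (dotProductEquiv ℝ (Fin n)).surjective ψ
  have hy : ∀ p q, G.Adj p q → w p + w q = 0 → y p + y q = 0 := fun p q hpq h0 => by
    rw [← dotProduct_single_add_single]
    exact hψ _ ((single_add_single_mem_weightFace_iff hpq).2 h0)
  obtain ⟨a, ha⟩ := hw.proportional y hy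
  refine ⟨a, ?_⟩
  rintro _ ⟨p, q, hpq, rfl⟩
  simpa only [dotProductEquiv_apply_apply, dotProduct_single_add_single] using ha p q hpq

lemma add_eq_zero_iff_of_weightFace_eq {w' : Fin n → ℝ} (h : weightFace G w = weightFace G w')
    (hij : G.Adj i j) : w i + w j = 0 ↔ w' i + w' j = 0 := by
  rw [← single_add_single_mem_weightFace_iff hij, h, single_add_single_mem_weightFace_iff hij]

theorem card_le_faceCount {ι : Type*} {w : ι → Fin n → ℝ} (hw : ∀ a, IsFacetWeight G (w a))
    (hinj : Function.Injective fun a => weightFace G (w a)) :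
    Nat.card ι ≤ faceCount (edgePolytope G) (polyDim (edgePolytope G) - 1) := by
  rw [← Set.ncard_univ, ← Set.ncard_image_of_injective _ hinj, image_univ]
  refine Set.ncard_le_ncard (range_subset_iff.2 fun a => ?_)
    ((finite_isExposed_convexHull (finite_edgeVectors G)).subset fun _ hx => hx.1)
  exact ⟨isExposed_weightFace (hw a).nonneg, (hw a).nonempty_weightFace,
    Nat.eq_sub_of_add_eq (hw a).polyDim_weightFace_add_one⟩

end EdgePolytope

section FundamentalSet

variable {V R : Type*} [Ring R] {G : SimpleGraph V} {y : V → R}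

lemma eq_neg_one_pow_length_mul (hy : ∀ i j, G.Adj i j → y i + y j = 0) {u v : V}
    (p : G.Walk u v) : y u = (-1) ^ p.length * y v := by
  induction p with
  | nil => simp
  | cons h p ih =>
    rw [SimpleGraph.Walk.length_cons, pow_succ', mul_assoc, ← ih, neg_one_mul]
    exact eq_neg_of_add_eq_zero_left (hy _ _ h)

lemma eq_zero_of_odd_closed_walk [NoZeroDivisors R] [CharZero R]
    (hy : ∀ i j, G.Adj i j → y i + y j = 0) {u : V}
    (p : G.Walk u u) (hp : Odd p.length) : y u = 0 := by
  have h := eq_neg_one_pow_length_mul hy p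
  rwa [hp.neg_one_pow, neg_one_mul, self_eq_neg] at h

lemma exists_odd_walk_of_adj_triangle {u v w : V} (huv : G.Adj u v) (hvw : G.Adj v w)
    (hwu : G.Adj w u) : ∃ p : G.Walk u u, Odd p.length :=
  ⟨.cons huv (.cons hvw (.cons hwu .nil)), 1, rfl⟩

/-- The vertices which neither lie in `T` nor have a neighbour in `T`. -/
def undominated (G : SimpleGraph V) (T : Set V) : Set V :=
  {v | v ∉ T ∧ ∀ t ∈ T, ¬ G.Adj t v}

lemma mem_or_mem_undominated_or_adj (G : SimpleGraph V) (T : Set V) (v : V) :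
    v ∈ T ∨ v ∈ undominated G T ∨ ∃ t ∈ T, G.Adj t v := by
  by_contra! h
  exact h.2.1 ⟨h.1, h.2.2⟩

lemma ne_univ_of_isIndepSet {T : Set V} (hG : G ≠ ⊥) (hT : G.IsIndepSet T) : T ≠ univ := by
  obtain ⟨p, q, hpq⟩ := SimpleGraph.ne_bot_iff_exists_adj.1 hG
  rintro rfl
  exact hT (mem_univ p) (mem_univ q) hpq.ne hpq

/-- An independent set `T`, possibly empty, such that no component of the graph induced on the
undominated vertices is bipartite. These sets index facets of the edge polytope of the cone. -/
structure IsFundamental (G : SimpleGraph V) (T : Set V) : Prop where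
  isIndepSet : G.IsIndepSet T
  exists_odd_walk : ∀ v : undominated G T,
    ∃ p : (G.induce (undominated G T)).Walk v v, Odd p.length

lemma IsFundamental.eq_zero_of_mem_undominated [NoZeroDivisors R] [CharZero R] {T : Set V}
    (hT : IsFundamental G T)
    (hy : ∀ i ∈ undominated G T, ∀ j ∈ undominated G T, G.Adj i j → y i + y j = 0) {v : V}
    (hv : v ∈ undominated G T) : y v = 0 := by
  obtain ⟨p, hp⟩ := hT.exists_odd_walk ⟨v, hv⟩
  exact eq_zero_of_odd_closed_walk (y := fun u : undominated G T => y u)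
    (fun i j hij => hy i i.2 j j.2 hij) p hp

end FundamentalSet

section Cone

variable {d : ℕ} {H : SimpleGraph (Fin d)}

/-- The cone over `H`: a new vertex `0`, the apex, is joined to every vertex `i.succ` of `H`. -/
def coneGraph (H : SimpleGraph (Fin d)) : SimpleGraph (Fin (d + 1)) :=
  SimpleGraph.starGraph 0 ⊔ H.map (Fin.succEmb d)

lemma coneGraph_adj_zero_succ (H : SimpleGraph (Fin d)) (i : Fin d) :
    (coneGraph H).Adj 0 i.succ := by
  simp [coneGraph, (Fin.succ_ne_zero i).symm]

lemma coneGraph_adj_succ_succ {i j : Fin d} : (coneGraph H).Adj i.succ j.succ ↔ H.Adj i j := by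
  simpa [coneGraph] using SimpleGraph.map_adj_apply (f := Fin.succEmb d) (G := H)

lemma forall_of_coneGraph_adj {p : Fin (d + 1) → Fin (d + 1) → Prop} (hp : ∀ i j, p i j → p j i)
    (hzero : ∀ i : Fin d, p 0 i.succ) (hsucc : ∀ i j, H.Adj i j → p i.succ j.succ) :
    ∀ i j, (coneGraph H).Adj i j → p i j := by
  refine Fin.cases (Fin.cases (fun h => (h.ne rfl).elim) fun j _ => hzero j) fun i => ?_
  exact Fin.cases (fun _ => hp _ _ (hzero i)) fun j hij => hsucc i j (coneGraph_adj_succ_succ.1 hij)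

lemma coneGraph_connected (H : SimpleGraph (Fin d)) : (coneGraph H).Connected :=
  (SimpleGraph.connected_starGraph 0).mono le_sup_left

/-- The weight defining the face of the cone spanned by the edges at the apex. -/
def apexWeight (d : ℕ) : Fin (d + 1) → ℝ := Fin.cons (-1) 1

open scoped Classical in
/-- The weight on the cone over `H` attached to an independent set `T` of `H`. An edge at the apex
lies on the face it defines exactly when its other end is in `T`. -/
noncomputable def indepWeight (H : SimpleGraph (Fin d)) (T : Set (Fin d)) : Fin (d + 1) → ℝ :=
  Fin.cons 1 fun i => if i ∈ T then -1 else if i ∈ undominated H T then 0 else 1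

variable {T : Set (Fin d)} {i : Fin d}

@[simp] lemma indepWeight_zero : indepWeight H T 0 = 1 := rfl

lemma indepWeight_of_mem (h : i ∈ T) : indepWeight H T i.succ = -1 := if_pos h

lemma indepWeight_of_mem_undominated (h : i ∈ undominated H T) : indepWeight H T i.succ = 0 :=
  (if_neg h.1).trans (if_pos h)

lemma indepWeight_of_adj (hT : H.IsIndepSet T) {t : Fin d} (ht : t ∈ T) (h : H.Adj t i) :
    indepWeight H T i.succ = 1 :=
  (if_neg fun hi => hT ht hi h.ne h).trans (if_neg fun hi => hi.2 t ht h)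

lemma neg_one_le_indepWeight (H : SimpleGraph (Fin d)) (T : Set (Fin d)) (i : Fin d) :
    -1 ≤ indepWeight H T i.succ := by
  simp only [indepWeight, Fin.cons_succ]
  split_ifs <;> norm_num

lemma indepWeight_nonneg (h : i ∉ T) : 0 ≤ indepWeight H T i.succ := by
  simp only [indepWeight, Fin.cons_succ, if_neg h]
  split_ifs <;> norm_num

lemma indepWeight_zero_add_eq_zero_iff :
    indepWeight H T 0 + indepWeight H T i.succ = 0 ↔ i ∈ T := by
  refine ⟨fun h => ?_, fun h => by rw [indepWeight_zero, indepWeight_of_mem h, add_neg_cancel]⟩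
  by_contra hi
  rw [indepWeight_zero] at h
  linarith [indepWeight_nonneg (H := H) hi]

lemma indepWeight_add_nonneg (hT : H.IsIndepSet T) :
    ∀ i j, (coneGraph H).Adj i j → 0 ≤ indepWeight H T i + indepWeight H T j := by
  refine forall_of_coneGraph_adj (fun i j => by rw [add_comm]; exact id) (fun i => ?_)
    fun i j hij => ?_
  · rw [indepWeight_zero]
    linarith [neg_one_le_indepWeight H T i]
  · by_cases hi : i ∈ T
    · rw [indepWeight_of_mem hi, indepWeight_of_adj hT hi hij, neg_add_cancel]
    by_cases hj : j ∈ T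
    · rw [indepWeight_of_mem hj, indepWeight_of_adj hT hj hij.symm, add_neg_cancel]
    exact add_nonneg (indepWeight_nonneg hi) (indepWeight_nonneg hj)

lemma IsFundamental.eq_smul_indepWeight (hT : IsFundamental H T) {y : Fin (d + 1) → ℝ}
    (hy : ∀ i j, (coneGraph H).Adj i j → indepWeight H T i + indepWeight H T j = 0 →
      y i + y j = 0) : y = y 0 • indepWeight H T := by
  have hmem : ∀ t ∈ T, y t.succ = -y 0 := fun t ht => by
    linarith [hy 0 t.succ (coneGraph_adj_zero_succ H t) (indepWeight_zero_add_eq_zero_iff.2 ht)]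
  have hH : ∀ i j, H.Adj i j → indepWeight H T i.succ + indepWeight H T j.succ = 0 →
      y i.succ + y j.succ = 0 := fun i j hij => hy _ _ (coneGraph_adj_succ_succ.2 hij)
  have hund : ∀ i ∈ undominated H T, y i.succ = 0 := fun i hi =>
    hT.eq_zero_of_mem_undominated (y := fun i => y i.succ) (fun i hi j hj hij =>
      hH i j hij (by rw [indepWeight_of_mem_undominated hi, indepWeight_of_mem_undominated hj,
        add_zero])) hi
  refine funext (Fin.cases (by simp) fun i => ?_)
  rw [Pi.smul_apply, smul_eq_mul]
  obtain hi | hi | ⟨t, ht, hti⟩ := mem_or_mem_undominated_or_adj H T i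
  · rw [indepWeight_of_mem hi, hmem i hi, mul_neg_one]
  · rw [indepWeight_of_mem_undominated hi, hund i hi, mul_zero]
  · have hwi := indepWeight_of_adj hT.isIndepSet ht hti
    rw [hwi, mul_one]
    linarith [hH t i hti (by rw [indepWeight_of_mem ht, hwi, neg_add_cancel]), hmem t ht]

lemma exists_indepWeight_add_eq_zero (hH : H ≠ ⊥) (T : Set (Fin d)) :
    ∃ i j, (coneGraph H).Adj i j ∧ indepWeight H T i + indepWeight H T j = 0 := by
  obtain rfl | ⟨t, ht⟩ := T.eq_empty_or_nonempty
  · obtain ⟨p, q, hpq⟩ := SimpleGraph.ne_bot_iff_exists_adj.1 hH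
    have hund : ∀ i, i ∈ undominated H ∅ := fun i => by simp [undominated]
    exact ⟨p.succ, q.succ, coneGraph_adj_succ_succ.2 hpq, by
      rw [indepWeight_of_mem_undominated (hund p), indepWeight_of_mem_undominated (hund q),
        add_zero]⟩
  · exact ⟨0, t.succ, coneGraph_adj_zero_succ H t, indepWeight_zero_add_eq_zero_iff.2 ht⟩

lemma IsFundamental.isFacetWeight (hH : H ≠ ⊥) (hT : IsFundamental H T) :
    IsFacetWeight (coneGraph H) (indepWeight H T) where
  nonneg := indepWeight_add_nonneg hT.isIndepSet
  exists_eq_zero := exists_indepWeight_add_eq_zero hH T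
  exists_ne_zero := by
    obtain ⟨i, hi⟩ := (ne_univ_iff_exists_notMem T).1 (ne_univ_of_isIndepSet hH hT.isIndepSet)
    exact ⟨0, i.succ, coneGraph_adj_zero_succ H i, mt indepWeight_zero_add_eq_zero_iff.1 hi⟩
  proportional y hy := ⟨y 0, fun i j _ => by
    have h (v : Fin (d + 1)) : y v = y 0 * indepWeight H T v :=
      congrFun (hT.eq_smul_indepWeight hy) v
    rw [h i, h j, mul_add]⟩

lemma apexWeight_zero_add_succ (i : Fin d) : apexWeight d 0 + apexWeight d i.succ = 0 := by
  simp [apexWeight]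

lemma apexWeight_succ_add_succ (i j : Fin d) : apexWeight d i.succ + apexWeight d j.succ = 2 := by
  norm_num [apexWeight]

lemma isFacetWeight_apexWeight (hH : H ≠ ⊥) : IsFacetWeight (coneGraph H) (apexWeight d) where
  nonneg := forall_of_coneGraph_adj (fun i j => by rw [add_comm]; exact id)
    (fun i => (apexWeight_zero_add_succ i).ge)
    fun i j _ => zero_le_two.trans_eq (apexWeight_succ_add_succ i j).symm
  exists_eq_zero := by
    obtain ⟨p, -⟩ := SimpleGraph.ne_bot_iff_exists_adj.1 hH
    exact ⟨0, p.succ, coneGraph_adj_zero_succ H p, apexWeight_zero_add_succ p⟩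
  exists_ne_zero := by
    obtain ⟨p, q, hpq⟩ := SimpleGraph.ne_bot_iff_exists_adj.1 hH
    exact ⟨p.succ, q.succ, coneGraph_adj_succ_succ.2 hpq,
      (apexWeight_succ_add_succ p q).trans_ne two_ne_zero⟩
  proportional y hy := by
    have hy0 : ∀ i : Fin d, y 0 + y i.succ = 0 := fun i =>
      hy 0 i.succ (coneGraph_adj_zero_succ H i) (apexWeight_zero_add_succ i)
    refine ⟨-y 0, forall_of_coneGraph_adj (fun i j h => by linarith) (fun i => ?_) fun i j _ => ?_⟩
    · rw [hy0, apexWeight_zero_add_succ, mul_zero]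
    · rw [apexWeight_succ_add_succ]
      linear_combination hy0 i + hy0 j

lemma span_edgeVectors_coneGraph (hH : H ≠ ⊥) :
    Submodule.span ℝ (edgeVectors (coneGraph H)) = ⊤ := by
  obtain ⟨p, q, hpq⟩ := SimpleGraph.ne_bot_iff_exists_adj.1 hH
  set S := Submodule.span ℝ (edgeVectors (coneGraph H))
  have hedge : ∀ i j, (coneGraph H).Adj i j → Pi.single i 1 + Pi.single j 1 ∈ S := fun i j hij =>
    Submodule.subset_span ⟨i, j, hij, rfl⟩
  have hspoke : ∀ i : Fin d, Pi.single 0 1 + Pi.single i.succ 1 ∈ S := fun i =>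
    hedge _ _ (coneGraph_adj_zero_succ H i)
  have hzero : Pi.single 0 1 ∈ S := by
    have h := S.smul_mem (2⁻¹ : ℝ) (sub_mem (add_mem (hspoke p) (hspoke q))
      (hedge _ _ (coneGraph_adj_succ_succ.2 hpq)))
    convert h using 1
    module
  rw [eq_top_iff, ← (Pi.basisFun ℝ (Fin (d + 1))).span_eq, Submodule.span_le, range_subset_iff]
  refine Fin.cases ?_ fun i => ?_
  · simpa using hzero
  · simpa using sub_mem (hspoke i) hzero

lemma polyDim_edgePolytope_coneGraph (hH : H ≠ ⊥) : polyDim (edgePolytope (coneGraph H)) = d := by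
  obtain ⟨p, -⟩ := SimpleGraph.ne_bot_iff_exists_adj.1 hH
  refine Nat.succ_injective ((polyDim_edgePolytope_add_one (coneGraph_adj_zero_succ H p)).trans ?_)
  rw [span_edgeVectors_coneGraph hH, finrank_top, Module.finrank_fin_fun]

lemma weightFace_indepWeight_injective (H : SimpleGraph (Fin d)) :
    Function.Injective fun T => weightFace (coneGraph H) (indepWeight H T) := fun T T' h =>
  Set.ext fun i => by
    rw [← indepWeight_zero_add_eq_zero_iff (H := H),
      add_eq_zero_iff_of_weightFace_eq h (coneGraph_adj_zero_succ H i),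
      indepWeight_zero_add_eq_zero_iff]

lemma weightFace_indepWeight_ne_weightFace_apexWeight (hT : T ≠ univ) :
    weightFace (coneGraph H) (indepWeight H T) ≠ weightFace (coneGraph H) (apexWeight d) := by
  obtain ⟨i, hi⟩ := (ne_univ_iff_exists_notMem T).1 hT
  intro h
  have h0 := (add_eq_zero_iff_of_weightFace_eq h (coneGraph_adj_zero_succ H i)).2
    (apexWeight_zero_add_succ i)
  exact hi (indepWeight_zero_add_eq_zero_iff.1 h0)

theorem card_isFundamental_lt_faceCount (hH : H ≠ ⊥) :
    Nat.card {T // IsFundamental H T} < faceCount (edgePolytope (coneGraph H)) (d - 1) := by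
  let w : Option {T // IsFundamental H T} → Fin (d + 1) → ℝ :=
    fun a => a.elim (apexWeight d) fun T => indepWeight H T
  have hw : ∀ a, IsFacetWeight (coneGraph H) (w a) :=
    Option.forall.2 ⟨isFacetWeight_apexWeight hH, fun T => T.2.isFacetWeight hH⟩
  have hinj : Function.Injective fun a => weightFace (coneGraph H) (w a) := by
    refine Option.injective_iff.2
      ⟨(weightFace_indepWeight_injective H).comp Subtype.val_injective, ?_⟩
    rintro ⟨T, hT⟩
    exact weightFace_indepWeight_ne_weightFace_apexWeight
      (ne_univ_of_isIndepSet hH T.2.isIndepSet) hT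
  have hcard := card_le_faceCount hw hinj
  rwa [Finite.card_option, polyDim_edgePolytope_coneGraph hH] at hcard

end Cone

section Star

variable {d : ℕ}

lemma edgeVectors_coneGraph_bot (d : ℕ) :
    edgeVectors (coneGraph (⊥ : SimpleGraph (Fin d))) =
      range fun i : Fin d => Pi.single 0 1 + Pi.single i.succ 1 := by
  refine Subset.antisymm ?_ (range_subset_iff.2 fun i => ⟨0, _, coneGraph_adj_zero_succ _ i, rfl⟩)
  rintro _ ⟨p, q, hpq, rfl⟩
  revert p q
  refine forall_of_coneGraph_adj (fun p q h => ?_) (fun i => ⟨i, rfl⟩) fun _ _ h => h.elim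
  rwa [add_comm (Pi.single p 1)] at h

lemma linearIndependent_single_zero_add_single_succ (d : ℕ) :
    LinearIndependent ℝ
      fun i : Fin d => (Pi.single 0 1 + Pi.single i.succ 1 : Fin (d + 1) → ℝ) := by
  refine LinearIndependent.of_comp (LinearMap.funLeft ℝ ℝ Fin.succ) ?_
  convert Pi.linearIndependent_single_one (Fin d) ℝ using 1
  ext i j
  simp [LinearMap.funLeft_apply, Pi.single_apply]

lemma polyDim_edgePolytope_coneGraph_bot (d : ℕ) :
    polyDim (edgePolytope (coneGraph (⊥ : SimpleGraph (Fin (d + 1))))) = d := by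
  refine Nat.succ_injective ((polyDim_edgePolytope_add_one (coneGraph_adj_zero_succ _ 0)).trans ?_)
  rw [edgeVectors_coneGraph_bot,
    finrank_span_eq_card (linearIndependent_single_zero_add_single_succ _), Fintype.card_fin]

lemma single_succ_zero_add_succ (i j : Fin d) :
    (Pi.single i.succ 1 : Fin (d + 1) → ℝ) 0 + (Pi.single i.succ 1 : Fin (d + 1) → ℝ) j.succ =
      if j = i then 1 else 0 := by
  simp [Pi.single_apply, (Fin.succ_ne_zero i).symm]

lemma isFacetWeight_single_succ [Nontrivial (Fin d)] (i : Fin d) :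
    IsFacetWeight (coneGraph ⊥) (Pi.single i.succ 1) where
  nonneg p q _ := by
    have h : (0 : Fin (d + 1) → ℝ) ≤ Pi.single i.succ 1 := Pi.single_nonneg.2 zero_le_one
    exact add_nonneg (h p) (h q)
  exists_eq_zero := by
    obtain ⟨j, hj⟩ := exists_ne i
    exact ⟨0, j.succ, coneGraph_adj_zero_succ ⊥ j,
      (single_succ_zero_add_succ i j).trans (if_neg hj)⟩
  exists_ne_zero :=
    ⟨0, i.succ, coneGraph_adj_zero_succ ⊥ i,
      ((single_succ_zero_add_succ i i).trans (if_pos rfl)).trans_ne one_ne_zero⟩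
  proportional y hy := by
    refine ⟨y 0 + y i.succ, forall_of_coneGraph_adj (fun p q h => by linarith) (fun j => ?_)
      fun _ _ h => h.elim⟩
    rw [single_succ_zero_add_succ]
    split_ifs with hj
    · rw [hj, mul_one]
    · rw [mul_zero]
      exact hy _ _ (coneGraph_adj_zero_succ ⊥ j)
        ((single_succ_zero_add_succ i j).trans (if_neg hj))

lemma weightFace_single_succ_injective (d : ℕ) : Function.Injective fun i : Fin d =>
    weightFace (coneGraph (⊥ : SimpleGraph (Fin d))) (Pi.single i.succ 1) := fun i j h => by
  have hiff := add_eq_zero_iff_of_weightFace_eq h (coneGraph_adj_zero_succ ⊥ i)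
  rw [single_succ_zero_add_succ, single_succ_zero_add_succ, if_pos rfl] at hiff
  by_contra hij
  exact one_ne_zero (hiff.2 (if_neg hij))

theorem succ_le_faceCount_edgePolytope_coneGraph_bot (hd : 0 < d) :
    d + 1 ≤ faceCount (edgePolytope (coneGraph (⊥ : SimpleGraph (Fin (d + 1))))) (d - 1) := by
  have : Nontrivial (Fin (d + 1)) := Fin.nontrivial_iff_two_le.2 (Nat.succ_le_succ hd)
  have hcard := card_le_faceCount isFacetWeight_single_succ
    (weightFace_single_succ_injective (d + 1))
  rwa [Nat.card_fin, polyDim_edgePolytope_coneGraph_bot] at hcard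

end Star

section Triangles

variable {d : ℕ} {s : ℕ → ℕ}

/-- The disjoint union of the cliques on the blocks `{3b, 3b + 1, 3b + 2} ∩ [0, d)`: these are
triangles for `b < d / 3`, and the `d % 3` remaining vertices form a smaller clique. -/
def triangles (d : ℕ) : SimpleGraph (Fin d) where
  Adj i j := i ≠ j ∧ (i : ℕ) / 3 = j / 3
  symm := ⟨fun _ _ h => ⟨h.1.symm, h.2.symm⟩⟩
  loopless := ⟨fun _ h => h.1 rfl⟩

lemma triangles_ne_bot (hd : 2 ≤ d) : triangles d ≠ ⊥ :=
  SimpleGraph.ne_bot_iff_exists_adj.2 ⟨⟨0, by omega⟩, ⟨1, hd⟩, by simp, by simp⟩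

/-- The vertex set with the single vertex `3b + s b` in block `b`, or none there if `3 ≤ s b`. -/
def selection (d : ℕ) (s : ℕ → ℕ) : Set (Fin d) :=
  {i | (i : ℕ) % 3 = s (i / 3)}

lemma isIndepSet_selection (d : ℕ) (s : ℕ → ℕ) : (triangles d).IsIndepSet (selection d s) := by
  rintro i (hi : _ = _) j (hj : _ = _) hij ⟨-, hblock⟩
  rw [← hblock] at hj
  exact hij (Fin.ext (by omega))

lemma mem_undominated_selection (hs : ∀ b, d / 3 ≤ b → s b = 0) {i : Fin d} :
    i ∈ undominated (triangles d) (selection d s) ↔ 3 ≤ s (i / 3) := by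
  constructor
  · rintro ⟨hi, hadj⟩
    by_contra! hlt
    obtain ⟨t, ht⟩ : ∃ t : Fin d, (t : ℕ) = 3 * (i / 3) + s (i / 3) := by
      have := hs (i / 3)
      exact ⟨⟨3 * (i / 3) + s (i / 3), by omega⟩, rfl⟩
    have hblock : (t : ℕ) / 3 = i / 3 := by omega
    have hmem : t ∈ selection d s := show (t : ℕ) % 3 = s (t / 3) by rw [hblock]; omega
    exact hadj t hmem ⟨fun h => hi (h ▸ hmem), hblock⟩
  · refine fun h => ⟨fun hi : _ = _ => by omega, fun t (ht : _ = _) hti => ?_⟩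
    rw [hti.2] at ht
    omega

lemma isFundamental_selection (hs : ∀ b, d / 3 ≤ b → s b = 0) :
    IsFundamental (triangles d) (selection d s) where
  isIndepSet := isIndepSet_selection d s
  exists_odd_walk := by
    rintro ⟨i, hi⟩
    have hsi : 3 ≤ s (i / 3) := (mem_undominated_selection hs).1 hi
    have hfull : (i : ℕ) / 3 < d / 3 := by
      by_contra! h
      have := hs _ h
      omega
    obtain ⟨j, hj⟩ : ∃ j : Fin d, (j : ℕ) = 3 * (i / 3) + (i + 1) % 3 := ⟨⟨_, by omega⟩, rfl⟩
    obtain ⟨k, hk⟩ : ∃ k : Fin d, (k : ℕ) = 3 * (i / 3) + (i + 2) % 3 := ⟨⟨_, by omega⟩, rfl⟩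
    have hji : (j : ℕ) / 3 = i / 3 := by omega
    have hki : (k : ℕ) / 3 = i / 3 := by omega
    have hj' := (mem_undominated_selection hs).2 (hji.symm ▸ hsi)
    have hk' := (mem_undominated_selection hs).2 (hki.symm ▸ hsi)
    have hij : (triangles d).Adj i j := ⟨Fin.val_ne_iff.1 (by omega), hji.symm⟩
    have hjk : (triangles d).Adj j k := ⟨Fin.val_ne_iff.1 (by omega), hji.trans hki.symm⟩
    have hki' : (triangles d).Adj k i := ⟨Fin.val_ne_iff.1 (by omega), hki⟩
    exact exists_odd_walk_of_adj_triangle (v := ⟨j, hj'⟩) (w := ⟨k, hk'⟩) hij hjk hki'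

/-- The selection of the vertex `3b + f b` in each triangle `b`, or of none if `f b = 3`, extended
by the first vertex of the incomplete block, so that this block leaves no bipartite component. -/
def triangleSelection (d : ℕ) (f : Fin (d / 3) → Fin 4) : Set (Fin d) :=
  selection d (Function.extend Fin.val (fun b => (f b : ℕ)) 0)

lemma isFundamental_triangleSelection (f : Fin (d / 3) → Fin 4) :
    IsFundamental (triangles d) (triangleSelection d f) :=
  isFundamental_selection fun b hb => Function.extend_apply' _ _ b
    fun ⟨c, hc⟩ => (hc ▸ c.2).not_ge hb

lemma mem_triangleSelection {f : Fin (d / 3) → Fin 4} {b : Fin (d / 3)} {r : ℕ} (hr : r < 3)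
    (h : 3 * (b : ℕ) + r < d) : ⟨3 * b + r, h⟩ ∈ triangleSelection d f ↔ r = f b := by
  have hmod : (3 * (b : ℕ) + r) % 3 = r := by omega
  have hdiv : (3 * (b : ℕ) + r) / 3 = b := by omega
  rw [triangleSelection, selection, mem_ofPred_eq, hmod, hdiv, Fin.val_injective.extend_apply]

lemma triangleSelection_injective (d : ℕ) : Function.Injective (triangleSelection d) := by
  intro f g hfg
  funext b
  have hiff : ∀ r : ℕ, r < 3 → (r = f b ↔ r = g b) := fun r hr => by
    have hlt : 3 * (b : ℕ) + r < d := by omega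
    rw [← mem_triangleSelection hr hlt, hfg, mem_triangleSelection hr hlt]
  have hf := hiff (f b)
  have hg := hiff (g b)
  omega

lemma four_pow_le_card_isFundamental (d : ℕ) :
    4 ^ (d / 3) ≤ Nat.card {T // IsFundamental (triangles d) T} := by
  have hcard := Nat.card_le_card_of_injective
    (fun f => (⟨_, isFundamental_triangleSelection f⟩ : {T // IsFundamental (triangles d) T}))
    fun f g h => triangleSelection_injective d (congrArg Subtype.val h)
  simpa [Nat.card_fun] using hcard

end Triangles

/-- For every `d > 0` there is a connected graph `G` (with no isolated vertices) whose
edge polytope has dimension `d` and more than `4 ^ ⌊d / 3⌋` facets (faces of dimension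
`d - 1`). -/
theorem exists_edgePolytope_many_facets (d : ℕ) (hd : 0 < d) :
    ∃ (n : ℕ) (G : SimpleGraph (Fin n)), G.Connected ∧
      (∀ v : Fin n, ∃ w : Fin n, G.Adj v w) ∧
      polyDim (edgePolytope G) = d ∧
      4 ^ (d / 3) < faceCount (edgePolytope G) (d - 1) := by
  have exists_adj {n : ℕ} [Nontrivial (Fin n)] {G : SimpleGraph (Fin n)} (hG : G.Connected) :
      ∀ v, ∃ w, G.Adj v w := fun v => hG.preconnected.exists_adj_of_nontrivial v
  obtain hd3 | hd3 := lt_or_ge d 3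
  · have hcon := coneGraph_connected (⊥ : SimpleGraph (Fin (d + 1)))
    refine ⟨d + 2, _, hcon, exists_adj hcon, polyDim_edgePolytope_coneGraph_bot d, ?_⟩
    rw [Nat.div_eq_of_lt hd3, pow_zero]
    exact (Nat.succ_lt_succ hd).trans_le (succ_le_faceCount_edgePolytope_coneGraph_bot hd)
  · have hne := triangles_ne_bot (d := d) (by omega)
    have : Nontrivial (Fin (d + 1)) := Fin.nontrivial_iff_two_le.2 (by omega)
    have hcon := coneGraph_connected (triangles d)
    exact ⟨d + 1, _, hcon, exists_adj hcon, polyDim_edgePolytope_coneGraph hne,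
      (four_pow_le_card_isFundamental d).trans_lt (card_isFundamental_lt_faceCount hne)⟩
end

section
/- Let k ≥ 2 and n ≥ 1, and let G be a finite simple graph on n vertices that contains no cycle of length at most k and no even cycle of length at most 2k. Then the number of edges of G satisfies e(G) ≤ (1/2)·n^{1+1/k} + ((k−1)/(2k))·n + n^{1−1/k}. -/
open Set

/-!
For the average degree `d` of a graph on `n` vertices without vertices of degree less than two,
Alon, Hoory and Linial showed that there are at least `n * d * (d - 1) ^ j` nonbacktracking walks of
length `j + 1`. Extending a walk by a uniformly chosen nonbacktracking step preserves the uniform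
distribution on its last dart, so each step adds the average of `log (deg - 1)` over all darts to
the average logarithm of the number of walks starting with a given dart, and Jensen's inequality
bounds that average below by `log (d - 1)`.

Under the hypothesis on cycles, the nonbacktracking walks of length `k` are paths, and two different
ones from the same vertex have different ends. There are therefore at most `n ^ 2` of them, so that
`d * (d - 1) ^ (k - 1) ≤ n`, which Bernoulli's inequality turns into the bound on the number of
edges. Vertices of degree at most one are removed one at a time, since the bound increases by at
least one with each vertex.
-/

open scoped BigOperators Finset

section Jensen

theorem map_expect_le_of_convexOn {ι : Type*} {s : Finset ι} {t : Set ℝ} {φ : ℝ → ℝ} {f : ι → ℝ}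
    (hφ : ConvexOn ℝ t φ) (hs : s.Nonempty) (hf : ∀ i ∈ s, f i ∈ t) :
    φ (𝔼 i ∈ s, f i) ≤ 𝔼 i ∈ s, φ (f i) := by
  have hcard : (#s : ℝ) ≠ 0 := mod_cast hs.card_ne_zero
  have h := hφ.map_sum_le (w := fun _ ↦ (#s : ℝ)⁻¹) (fun _ _ ↦ by positivity) (by simp [hcard]) hf
  simpa only [Finset.expect_eq_sum_div_card, div_eq_inv_mul, smul_eq_mul, Finset.mul_sum] using h

theorem log_card_add_expect_log_le_log_sum {ι : Type*} {s : Finset ι} {f : ι → ℝ}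
    (hs : s.Nonempty) (hf : ∀ i ∈ s, 0 < f i) :
    Real.log #s + 𝔼 i ∈ s, Real.log (f i) ≤ Real.log (∑ i ∈ s, f i) := by
  have hcard : (#s : ℝ) ≠ 0 := mod_cast hs.card_ne_zero
  have h := map_expect_le_of_convexOn strictConcaveOn_log_Ioi.concaveOn.neg hs hf
  simp only [Pi.neg_apply, Finset.expect_neg_distrib, neg_le_neg_iff] at h
  rw [← Finset.card_mul_expect, Real.log_mul hcard (Finset.expect_pos hf hs).ne']
  linarith

theorem monotoneOn_log_add_inv : MonotoneOn (fun x : ℝ ↦ Real.log x + x⁻¹) (Ici 1) := by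
  intro x (hx : 1 ≤ x) y (hy : 1 ≤ y) hxy
  have hlog := Real.one_sub_inv_le_log_of_pos (show 0 < y / x by positivity)
  rw [Real.log_div (by positivity) (by positivity), inv_div] at hlog
  have hinv : x⁻¹ - y⁻¹ = (1 - x / y) * x⁻¹ := by field_simp
  have hle : (1 - x / y) * x⁻¹ ≤ 1 - x / y :=
    mul_le_of_le_one_right (sub_nonneg.2 (div_le_one_of_le₀ hxy (by positivity)))
      (inv_le_one_of_one_le₀ hx)
  change Real.log x + x⁻¹ ≤ Real.log y + y⁻¹
  linarith

theorem convexOn_mul_log_sub_one : ConvexOn ℝ (Ici 2) fun x : ℝ ↦ x * Real.log (x - 1) := by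
  have hderiv : ∀ x : ℝ, 1 < x →
      HasDerivAt (fun x : ℝ ↦ x * Real.log (x - 1)) (Real.log (x - 1) + (x - 1)⁻¹ + 1) x := by
    intro x hx
    have hx1 : x - 1 ≠ 0 := (sub_pos.2 hx).ne'
    convert! (hasDerivAt_id x).mul (((hasDerivAt_id x).sub_const 1).log hx1) using 1
    simp only [id]
    field_simp
    ring
  have hgt : ∀ x ∈ Ici (2 : ℝ), 1 < x := fun x hx ↦ one_lt_two.trans_le hx
  refine MonotoneOn.convexOn_of_deriv (convex_Ici 2)
    (fun x hx ↦ (hderiv x (hgt x hx)).continuousAt.continuousWithinAt)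
    (fun x hx ↦ (hderiv x (hgt x (interior_subset hx))).differentiableAt.differentiableWithinAt) ?_
  intro x hx y hy hxy
  rw [interior_Ici, mem_Ioi] at hx hy
  rw [(hderiv x (by linarith)).deriv, (hderiv y (by linarith)).deriv]
  gcongr ?_ + 1
  exact monotoneOn_log_add_inv (show 1 ≤ x - 1 by linarith) (show 1 ≤ y - 1 by linarith)
    (by linarith)

end Jensen

theorem sum_expect_erase {ι K : Type*} [DecidableEq ι] [Semifield K] [CharZero K] {s : Finset ι}
    (hs : #s ≠ 1) (f : ι → K) :
    ∑ a ∈ s, 𝔼 b ∈ s.erase a, f b = ∑ b ∈ s, f b := by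
  calc ∑ a ∈ s, 𝔼 b ∈ s.erase a, f b
      = ∑ a ∈ s, ∑ b ∈ s.erase a, f b / (#s - 1 : ℕ) := by
        refine Finset.sum_congr rfl fun a ha ↦ ?_
        rw [Finset.expect_eq_sum_div_card, Finset.card_erase_of_mem ha, Finset.sum_div]
    _ = ∑ b ∈ s, ∑ _a ∈ s.erase b, f b / (#s - 1 : ℕ) :=
        Finset.sum_comm' fun a b ↦ by grind
    _ = ∑ b ∈ s, f b := by
        refine Finset.sum_congr rfl fun b hb ↦ ?_
        have hne : ((#s - 1 : ℕ) : K) ≠ 0 := by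
          have := Finset.card_pos.2 ⟨b, hb⟩
          exact_mod_cast (by lia : #s - 1 ≠ 0)
        rw [Finset.sum_const, Finset.card_erase_of_mem hb, nsmul_eq_mul, mul_div_cancel₀ _ hne]

section Nonbacktracking

variable {V : Type*} (G : SimpleGraph V)

/-- The number of nonbacktracking walks of length `j + 1` whose first two vertices are `u` and `x`,
provided that these are adjacent. -/
def nonbacktrackingCount [DecidableEq V] [G.LocallyFinite] : ℕ → V → V → ℕ
  | 0, _, _ => 1
  | j + 1, u, x => ∑ y ∈ (G.neighborFinset x).erase u, nonbacktrackingCount j x y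

/-- The average degree of a finite graph (zero if there are no vertices). -/
noncomputable def averageDegree [Fintype V] [G.LocallyFinite] : ℝ :=
  𝔼 v, (G.degree v : ℝ)

variable {G}

theorem card_erase_neighborFinset_add_one [DecidableEq V] {u x : V} [Fintype (G.neighborSet x)]
    (h : G.Adj u x) : #((G.neighborFinset x).erase u) + 1 = G.degree x := by
  rw [Finset.card_erase_add_one ((G.mem_neighborFinset x u).2 h.symm),
    G.card_neighborFinset_eq_degree]

theorem erase_neighborFinset_nonempty [DecidableEq V] {u x : V} [Fintype (G.neighborSet x)]
    (hx : G.degree x ≠ 1) (h : G.Adj u x) : ((G.neighborFinset x).erase u).Nonempty := by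
  rw [← Finset.card_ne_zero]
  have := card_erase_neighborFinset_add_one h
  lia

theorem adj_of_mem_erase_neighborFinset [DecidableEq V] {u x y : V} [Fintype (G.neighborSet x)]
    (hy : y ∈ (G.neighborFinset x).erase u) : G.Adj x y :=
  (G.mem_neighborFinset x y).1 (Finset.mem_of_mem_erase hy)

theorem sum_sum_neighborFinset_comm {M : Type*} [AddCommMonoid M] [Fintype V] [G.LocallyFinite]
    (f : V → V → M) :
    ∑ u, ∑ x ∈ G.neighborFinset u, f u x = ∑ x, ∑ u ∈ G.neighborFinset x, f u x :=
  Finset.sum_comm' fun u x ↦ by simp [G.adj_comm]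

theorem nonbacktrackingCount_pos [DecidableEq V] [G.LocallyFinite] (hdeg : ∀ v, G.degree v ≠ 1)
    (j : ℕ) {u x : V} (h : G.Adj u x) : 0 < nonbacktrackingCount G j u x := by
  induction j generalizing u x with
  | zero => exact Nat.one_pos
  | succ j ih =>
    exact Finset.sum_pos (fun y hy ↦ ih (adj_of_mem_erase_neighborFinset hy))
      (erase_neighborFinset_nonempty (hdeg x) h)

theorem log_degree_sub_one_add_expect_log_nonbacktrackingCount_le [DecidableEq V] [G.LocallyFinite]
    (hdeg : ∀ v, G.degree v ≠ 1) (j : ℕ) {u x : V} (h : G.Adj u x) :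
    Real.log (G.degree x - 1) +
        𝔼 y ∈ (G.neighborFinset x).erase u, Real.log (nonbacktrackingCount G j x y) ≤
      Real.log (nonbacktrackingCount G (j + 1) u x) := by
  have hcard : (G.degree x : ℝ) - 1 = #((G.neighborFinset x).erase u) := by
    rw [← card_erase_neighborFinset_add_one h, Nat.cast_add_one, add_sub_cancel_right]
  rw [hcard, nonbacktrackingCount, Nat.cast_sum]
  exact log_card_add_expect_log_le_log_sum (erase_neighborFinset_nonempty (hdeg x) h) fun y hy ↦
    mod_cast nonbacktrackingCount_pos hdeg j (adj_of_mem_erase_neighborFinset hy)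

variable [Fintype V]

theorem sum_degree_mul_log_add_sum_log_nonbacktrackingCount_le [DecidableEq V] [G.LocallyFinite]
    (hdeg : ∀ v, G.degree v ≠ 1) (j : ℕ) :
    ∑ v, G.degree v * Real.log (G.degree v - 1) +
        ∑ u, ∑ x ∈ G.neighborFinset u, Real.log (nonbacktrackingCount G j u x) ≤
      ∑ u, ∑ x ∈ G.neighborFinset u, Real.log (nonbacktrackingCount G (j + 1) u x) := by
  calc _ = ∑ x, ∑ u ∈ G.neighborFinset x, (Real.log (G.degree x - 1) +
          𝔼 y ∈ (G.neighborFinset x).erase u, Real.log (nonbacktrackingCount G j x y)) := by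
        rw [← Finset.sum_add_distrib]
        refine Finset.sum_congr rfl fun x _ ↦ ?_
        rw [Finset.sum_add_distrib, Finset.sum_const, nsmul_eq_mul, G.card_neighborFinset_eq_degree,
          sum_expect_erase (by simpa using hdeg x)]
    _ = ∑ u, ∑ x ∈ G.neighborFinset u, (Real.log (G.degree x - 1) +
          𝔼 y ∈ (G.neighborFinset x).erase u, Real.log (nonbacktrackingCount G j x y)) :=
        (sum_sum_neighborFinset_comm _).symm
    _ ≤ _ := by
        gcongr with u _ x hx
        exact log_degree_sub_one_add_expect_log_nonbacktrackingCount_le hdeg j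
          ((G.mem_neighborFinset u x).1 hx)

theorem mul_sum_degree_mul_log_le_sum_log_nonbacktrackingCount [DecidableEq V] [G.LocallyFinite]
    (hdeg : ∀ v, G.degree v ≠ 1) (j : ℕ) :
    j * ∑ v, G.degree v * Real.log (G.degree v - 1) ≤
      ∑ u, ∑ x ∈ G.neighborFinset u, Real.log (nonbacktrackingCount G j u x) := by
  induction j with
  | zero => simp [nonbacktrackingCount]
  | succ j ih =>
    refine le_trans ?_ (sum_degree_mul_log_add_sum_log_nonbacktrackingCount_le hdeg j)
    push_cast
    linarith

theorem two_le_averageDegree [Nonempty V] [G.LocallyFinite] (hdeg : ∀ v, 2 ≤ G.degree v) :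
    2 ≤ averageDegree G :=
  Finset.le_expect Finset.univ_nonempty fun v _ ↦ mod_cast hdeg v

theorem card_mul_averageDegree_mul_log_le [Nonempty V] [G.LocallyFinite]
    (hdeg : ∀ v, 2 ≤ G.degree v) :
    Fintype.card V * averageDegree G * Real.log (averageDegree G - 1) ≤
      ∑ v, G.degree v * Real.log (G.degree v - 1) := by
  rw [← Fintype.card_mul_expect, mul_assoc]
  gcongr
  exact map_expect_le_of_convexOn convexOn_mul_log_sub_one Finset.univ_nonempty fun v _ ↦
    (mod_cast hdeg v : (2 : ℝ) ≤ G.degree v)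

theorem card_mul_averageDegree_mul_pow_le_sum_nonbacktrackingCount [Nonempty V] [DecidableEq V]
    [G.LocallyFinite] (hdeg : ∀ v, 2 ≤ G.degree v) (j : ℕ) :
    Fintype.card V * averageDegree G * (averageDegree G - 1) ^ j ≤
      ∑ u, ∑ x ∈ G.neighborFinset u, (nonbacktrackingCount G j u x : ℝ) := by
  have hdeg' : ∀ v, G.degree v ≠ 1 := fun v ↦ Nat.ne_of_gt (hdeg v)
  have hd := two_le_averageDegree hdeg
  have hd1 : 0 < averageDegree G - 1 := by linarith
  let darts : Finset (Σ _ : V, V) := Finset.univ.sigma fun u ↦ G.neighborFinset u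
  have hcard : (#darts : ℝ) = Fintype.card V * averageDegree G := by
    simp [darts, averageDegree]
  have hD : 0 < Fintype.card V * averageDegree G := by positivity
  have hne : darts.Nonempty := by
    rw [← Finset.card_pos, ← Nat.cast_pos (α := ℝ), hcard]
    exact hD
  have hpos : ∀ e ∈ darts, (0 : ℝ) < nonbacktrackingCount G j e.1 e.2 := fun e he ↦
    mod_cast nonbacktrackingCount_pos hdeg' j (by simpa [darts] using he)
  have hlog : j * Real.log (averageDegree G - 1) ≤
      𝔼 e ∈ darts, Real.log (nonbacktrackingCount G j e.1 e.2) := by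
    rw [Finset.expect_eq_sum_div_card, hcard, le_div_iff₀ hD, Finset.sum_sigma]
    calc _ = j * (Fintype.card V * averageDegree G * Real.log (averageDegree G - 1)) := by ring
      _ ≤ j * ∑ v, G.degree v * Real.log (G.degree v - 1) := by
        gcongr
        exact card_mul_averageDegree_mul_log_le hdeg
      _ ≤ _ := mul_sum_degree_mul_log_le_sum_log_nonbacktrackingCount hdeg' j
  have hamgm := log_card_add_expect_log_le_log_sum hne hpos
  rw [hcard] at hamgm
  rw [Finset.sum_sigma', ← Real.log_le_log_iff (by positivity) (Finset.sum_pos hpos hne),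
    Real.log_mul hD.ne' (by positivity), Real.log_pow]
  linarith

end Nonbacktracking

/-- Every cycle of `G` is longer than `k`, and every even cycle is longer than `2 * k`. -/
structure CycleSparse {V : Type*} (G : SimpleGraph V) (k : ℕ) : Prop where
  lt_length : ∀ {v : V} {c : G.Walk v v}, c.IsCycle → k < c.length
  two_mul_lt_length : ∀ {v : V} {c : G.Walk v v}, c.IsCycle → Even c.length → 2 * k < c.length

section Paths

open SimpleGraph

variable {V : Type*} {G : SimpleGraph V}

theorem isPath_cons_of_length_lt_egirth {u x v : V} {p : G.Walk x v} (hp : p.IsPath)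
    (h : G.Adj u x) (hu : p.snd ≠ u) (hlen : (p.length + 1 : ℕ) < G.egirth) :
    (Walk.cons h p).IsPath := by
  classical
  refine (Walk.cons_isPath_iff h p).2 ⟨hp, fun hup ↦ hlen.not_ge ?_⟩
  have hc : (Walk.cons h (p.takeUntil u hup)).IsCycle := by
    refine (Walk.cons_isCycle_iff _ h).2 ⟨hp.takeUntil hup, fun he ↦ hu ?_⟩
    exact (hp.eq_snd_of_mem_edges (Sym2.eq_swap ▸ p.edges_takeUntil_subset_edges hup he)).symm
  refine (egirth_le_length hc).trans ?_
  rw [Walk.length_cons]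
  exact_mod_cast Nat.succ_le_succ (p.length_takeUntil_le_length hup)

/-- The ends of the paths of length `j` whose first two vertices are `u` and `x`. -/
def pathEnds (G : SimpleGraph V) (j : ℕ) (u x : V) : Set V :=
  {v | ∃ p : G.Walk u v, p.IsPath ∧ p.length = j ∧ p.snd = x}

theorem mem_pathEnds_one {u x : V} (h : G.Adj u x) : x ∈ pathEnds G 1 u x :=
  ⟨h.toWalk, by simp [h.ne], by simp, by simp⟩

theorem pathEnds_subset_pathEnds_succ {j : ℕ} {u x y : V} (hj : (j + 1 : ℕ) < G.egirth)
    (h : G.Adj u x) (hy : y ≠ u) : pathEnds G j x y ⊆ pathEnds G (j + 1) u x := by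
  rintro v ⟨p, hp, rfl, rfl⟩
  exact ⟨.cons h p, isPath_cons_of_length_lt_egirth hp h hy hj, by simp, by simp⟩

end Paths

namespace CycleSparse

open SimpleGraph

variable {V : Type*} {G : SimpleGraph V} {k : ℕ}

theorem lt_egirth (hG : CycleSparse G k) : k < G.egirth :=
  ENat.add_one_le_iff (ENat.natCast_ne_top k) |>.1 <|
    le_egirth.2 fun _ _ hc ↦ mod_cast hG.lt_length hc

theorem induce (hG : CycleSparse G k) (s : Set V) : CycleSparse (G.induce s) k := by
  have hmap {v : s} {c : (G.induce s).Walk v v} (hc : c.IsCycle) :=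
    hc.map (f := (Embedding.induce (G := G) s).toHom) Subtype.val_injective
  constructor
  · intro v c hc
    simpa only [Walk.length_map] using hG.lt_length (hmap hc)
  · intro v c hc
    simpa only [Walk.length_map] using hG.two_mul_lt_length (hmap hc)

theorem lt_length_add_length_of_ne (hG : CycleSparse G k) {u v : V} {p q : G.Walk u v}
    (hp : p.IsPath) (hq : q.IsPath) (hne : p ≠ q) : k < p.length + q.length := by
  obtain ⟨_, _, _, c, hc, hle⟩ := hp.exists_isCycle_length_le_add_of_ne hq hne
  exact (hG.lt_length hc).trans_le hle

theorem isPath_unique (hG : CycleSparse G k) {u v : V} {p q : G.Walk u v}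
    (hp : p.IsPath) (hq : q.IsPath) (hlen : p.length = q.length) (hk : p.length ≤ k) : p = q := by
  by_contra hne
  obtain ⟨_, _, p', q', ⟨p₁, p₂, rfl⟩, ⟨q₁, q₂, rfl⟩, hc⟩ := hp.exists_isCycle_of_ne hq hne
  have hlt := hG.lt_length hc
  have heven := hG.two_mul_lt_length hc
  simp only [Walk.length_append, Walk.length_reverse] at hlen hk hlt heven
  -- A second cycle, formed by the parts before or after the first one, would make the two paths
  -- too long, so the first cycle consists of two segments of the same length.
  have hstart : p₁ = q₁ := by
    by_contra hne₁
    have := hG.lt_length_add_length_of_ne hp.of_append_left.of_append_left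
      hq.of_append_left.of_append_left hne₁
    lia
  have hend : p₂ = q₂ := by
    by_contra hne₂
    have := hG.lt_length_add_length_of_ne hp.of_append_right hq.of_append_right hne₂
    lia
  subst hstart hend
  have := heven ⟨p'.length, by lia⟩
  lia

theorem disjoint_pathEnds (hG : CycleSparse G k) {j : ℕ} (hj : j ≤ k) {u x y : V} (hxy : x ≠ y) :
    Disjoint (pathEnds G j u x) (pathEnds G j u y) := by
  refine Set.disjoint_left.2 ?_
  rintro v ⟨p, hp, hpj, rfl⟩ ⟨q, hq, hqj, rfl⟩
  exact hxy (congrArg Walk.snd (hG.isPath_unique hp hq (hpj.trans hqj.symm) (hpj.trans_le hj)))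

theorem sum_encard_pathEnds_le (hG : CycleSparse G k) {j : ℕ} (hj : j ≤ k) {u : V}
    {s : Finset V} {t : Set V} (hst : ∀ x ∈ s, pathEnds G j u x ⊆ t) :
    ∑ x ∈ s, (pathEnds G j u x).encard ≤ t.encard := by
  have hdisj : (s : Set V).PairwiseDisjoint (pathEnds G j u) :=
    fun _ _ _ _ hxy ↦ hG.disjoint_pathEnds hj hxy
  rw [← finsum_mem_coe_finset, ← s.finite_toSet.encard_biUnion hdisj]
  exact encard_le_encard (iUnion₂_subset hst)

variable [G.LocallyFinite]

theorem nonbacktrackingCount_le_encard_pathEnds [DecidableEq V] (hG : CycleSparse G k) {j : ℕ}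
    (hj : j + 1 ≤ k) {u x : V} (h : G.Adj u x) :
    (nonbacktrackingCount G j u x : ℕ∞) ≤ (pathEnds G (j + 1) u x).encard := by
  induction j generalizing u x with
  | zero =>
    rw [nonbacktrackingCount, Nat.cast_one, one_le_encard_iff_nonempty]
    exact ⟨x, mem_pathEnds_one h⟩
  | succ j ih =>
    have hgirth : (j + 1 + 1 : ℕ) < G.egirth := hG.lt_egirth.trans_le' (mod_cast hj)
    calc (nonbacktrackingCount G (j + 1) u x : ℕ∞)
        = ∑ y ∈ (G.neighborFinset x).erase u, (nonbacktrackingCount G j x y : ℕ∞) := by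
          rw [nonbacktrackingCount, Nat.cast_sum]
      _ ≤ ∑ y ∈ (G.neighborFinset x).erase u, (pathEnds G (j + 1) x y).encard :=
          Finset.sum_le_sum fun y hy ↦ ih (by lia) (adj_of_mem_erase_neighborFinset hy)
      _ ≤ (pathEnds G (j + 1 + 1) u x).encard :=
          hG.sum_encard_pathEnds_le (by lia) fun y hy ↦
            pathEnds_subset_pathEnds_succ hgirth h (Finset.ne_of_mem_erase hy)

theorem sum_nonbacktrackingCount_le_card [Fintype V] [DecidableEq V] {j : ℕ}
    (hG : CycleSparse G (j + 1)) (u : V) :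
    ∑ x ∈ G.neighborFinset u, nonbacktrackingCount G j u x ≤ Fintype.card V := by
  rw [← Nat.cast_le (α := ℕ∞), Nat.cast_sum, ← ENat.card_eq_coe_fintype_card, ← encard_univ]
  calc _ ≤ ∑ x ∈ G.neighborFinset u, (pathEnds G (j + 1) u x).encard :=
        Finset.sum_le_sum fun x hx ↦
          hG.nonbacktrackingCount_le_encard_pathEnds le_rfl ((G.mem_neighborFinset u x).1 hx)
    _ ≤ univ.encard := hG.sum_encard_pathEnds_le le_rfl fun _ _ ↦ subset_univ _

theorem averageDegree_mul_pow_le_card [Fintype V] [Nonempty V] {j : ℕ}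
    (hG : CycleSparse G (j + 1)) (hdeg : ∀ v, 2 ≤ G.degree v) :
    averageDegree G * (averageDegree G - 1) ^ j ≤ Fintype.card V := by
  classical
  have hcard : (0 : ℝ) < Fintype.card V := mod_cast Fintype.card_pos
  refine le_of_mul_le_mul_left ?_ hcard
  calc _ = Fintype.card V * averageDegree G * (averageDegree G - 1) ^ j := by ring
    _ ≤ ∑ u, ∑ x ∈ G.neighborFinset u, (nonbacktrackingCount G j u x : ℝ) :=
        card_mul_averageDegree_mul_pow_le_sum_nonbacktrackingCount hdeg j
    _ ≤ ∑ _u : V, (Fintype.card V : ℝ) :=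
        Finset.sum_le_sum fun u _ ↦ mod_cast hG.sum_nonbacktrackingCount_le_card u
    _ = Fintype.card V * Fintype.card V := by simp

end CycleSparse

section Numerics

theorem pow_succ_le_mul_sub_one_pow (j : ℕ) {x : ℝ} (hx : 1 ≤ x) :
    x ^ (j + 1) ≤ (x + j / (j + 1) + 2 / x) * (x + j / (j + 1) + 2 / x - 1) ^ j := by
  set a : ℝ := j / (j + 1) with ha
  set y : ℝ := x⁻¹ with hy
  have hx0 : 0 < x := by linarith
  have hxy : x * y = 1 := mul_inv_cancel₀ hx0.ne'
  have hy0 : 0 < y := inv_pos.2 hx0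
  have hy1 : y ≤ 1 := inv_le_one_of_one_le₀ hx
  have ha0 : 0 ≤ a := by positivity
  have ha1 : a ≤ 1 := div_le_one_of_le₀ (by linarith) (by positivity)
  have haj : j * (1 - a) = a := by rw [ha]; field_simp; ring
  have hbernoulli : 1 + (-a * y + 2 * j * y ^ 2) ≤ (1 + (-(1 - a) * y + 2 * y ^ 2)) ^ j := by
    refine le_of_eq_of_le ?_ (one_add_mul_le_pow (by nlinarith) j)
    linear_combination y * haj
  have hproduct : 1 ≤ (1 + (a * y + 2 * y ^ 2)) * (1 + (-a * y + 2 * j * y ^ 2)) := by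
    have hexpand : (1 + (a * y + 2 * y ^ 2)) * (1 + (-a * y + 2 * j * y ^ 2)) =
        1 + y ^ 2 * (2 - a ^ 2 - 2 * a * y + 2 * j * (1 + a * y) + 4 * j * y ^ 2) := by ring
    have hja : a ≤ j := by nlinarith
    have hcoeff : 0 ≤ 2 - a ^ 2 - 2 * a * y + 2 * j * (1 + a * y) + 4 * j * y ^ 2 := by
      have : 0 ≤ j * (a * y) := by positivity
      have : 0 ≤ j * y ^ 2 := by positivity
      nlinarith
    rw [hexpand]
    exact le_add_of_nonneg_right (by positivity)
  calc x ^ (j + 1) ≤ x ^ (j + 1) *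
        ((1 + (a * y + 2 * y ^ 2)) * (1 + (-(1 - a) * y + 2 * y ^ 2)) ^ j) := by
        refine le_mul_of_one_le_right (by positivity) (hproduct.trans ?_)
        gcongr
    _ = (x * (1 + (a * y + 2 * y ^ 2))) * (x * (1 + (-(1 - a) * y + 2 * y ^ 2))) ^ j := by
        rw [mul_pow]
        ring
    _ = (x + a + 2 / x) * (x + a + 2 / x - 1) ^ j := by
        rw [div_eq_mul_inv, ← hy]
        congr 2
        · linear_combination (a + 2 * y) * hxy
        · linear_combination (-(1 - a) + 2 * y) * hxy

theorem le_add_of_mul_sub_one_pow_le {j : ℕ} {d x : ℝ} (hx : 1 ≤ x)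
    (h : d * (d - 1) ^ j ≤ x ^ (j + 1)) : d ≤ x + j / (j + 1) + 2 / x := by
  by_contra! hd
  have hpos : 0 < x + j / (j + 1) + 2 / x - 1 := by
    have : (0 : ℝ) ≤ j / (j + 1) := by positivity
    have : 0 < 2 / x := by positivity
    linarith
  have hlt : (x + j / (j + 1) + 2 / x) * (x + j / (j + 1) + 2 / x - 1) ^ j < d * (d - 1) ^ j :=
    mul_lt_mul hd (pow_le_pow_left₀ hpos.le (by linarith) j) (pow_pos hpos j) (by linarith)
  exact ((pow_succ_le_mul_sub_one_pow j hx).trans_lt (hlt.trans_le h)).false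

theorem rpow_one_add_add_le {a x : ℝ} (ha : 0 ≤ a) (hx : 1 ≤ x) :
    x ^ (1 + a) + (1 + a) ≤ (x + 1) ^ (1 + a) := by
  have hx0 : 0 < x := by linarith
  have hbernoulli : 1 + (1 + a) * x⁻¹ ≤ (1 + x⁻¹) ^ (1 + a) :=
    one_add_mul_self_le_rpow_one_add (by linarith [inv_pos.2 hx0]) (by linarith)
  calc x ^ (1 + a) + (1 + a) ≤ x ^ (1 + a) + (1 + a) * x ^ a := by
        gcongr
        exact le_mul_of_one_le_right (by positivity) (Real.one_le_rpow hx ha)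
    _ = x ^ (1 + a) * (1 + (1 + a) * x⁻¹) := by
        rw [Real.rpow_add hx0, Real.rpow_one]
        field_simp
    _ ≤ x ^ (1 + a) * (1 + x⁻¹) ^ (1 + a) := by gcongr
    _ = (x + 1) ^ (1 + a) := by
        rw [← Real.mul_rpow hx0.le (by positivity), mul_add, mul_one, mul_inv_cancel₀ hx0.ne']

/-- The bound on the number of edges of a `CycleSparse` graph, as a function of the number `x` of
vertices. -/
noncomputable def cycleSparseBound (k : ℕ) (x : ℝ) : ℝ :=
  (1 / 2) * x ^ ((1 : ℝ) + 1 / (k : ℝ)) + (((k : ℝ) - 1) / (2 * (k : ℝ))) * x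
    + x ^ ((1 : ℝ) - 1 / (k : ℝ))

variable {k : ℕ}

theorem cycleSparseBound_nonneg (hk : 1 ≤ k) {x : ℝ} (hx : 0 ≤ x) : 0 ≤ cycleSparseBound k x := by
  have : (0 : ℝ) ≤ k - 1 := sub_nonneg.2 (mod_cast hk)
  unfold cycleSparseBound
  positivity

theorem cycleSparseBound_add_one_le (hk : 1 ≤ k) {x : ℝ} (hx : 1 ≤ x) :
    cycleSparseBound k x + 1 ≤ cycleSparseBound k (x + 1) := by
  have hk' : (1 : ℝ) ≤ k := mod_cast hk
  have ha : 0 ≤ (1 : ℝ) - 1 / k := sub_nonneg.2 (div_le_one_of_le₀ hk' (by positivity))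
  have hfirst := rpow_one_add_add_le (a := 1 / (k : ℝ)) (by positivity) hx
  have hlast : x ^ ((1 : ℝ) - 1 / (k : ℝ)) ≤ (x + 1) ^ ((1 : ℝ) - 1 / (k : ℝ)) := by
    gcongr
    linarith
  have hcoeff : ((k : ℝ) - 1) / (2 * k) = 1 / 2 - 1 / 2 * (1 / k) := by field_simp
  rw [cycleSparseBound, cycleSparseBound, hcoeff]
  linarith

theorem half_mul_le_cycleSparseBound {j : ℕ} {d n : ℝ} (hn : 1 ≤ n)
    (h : d * (d - 1) ^ j ≤ n) : n * d / 2 ≤ cycleSparseBound (j + 1) n := by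
  have hn0 : 0 < n := by linarith
  set x : ℝ := n ^ (1 / ((j + 1 : ℕ) : ℝ)) with hx
  have hx1 : 1 ≤ x := Real.one_le_rpow hn (by positivity)
  have hxn : x ^ (j + 1) = n := by
    rw [hx, one_div, Real.rpow_inv_natCast_pow hn0.le j.succ_ne_zero]
  calc n * d / 2 ≤ n * (x + j / (j + 1) + 2 / x) / 2 := by
        gcongr
        exact le_add_of_mul_sub_one_pow_le hx1 (hxn.symm ▸ h)
    _ = cycleSparseBound (j + 1) n := by
        rw [cycleSparseBound, Real.rpow_add hn0, Real.rpow_sub hn0, Real.rpow_one, ← hx]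
        push_cast
        field_simp
        ring

end Numerics

section EdgeBound

variable {V : Type*} {G : SimpleGraph V} {k : ℕ}

theorem card_edgeFinset_of_subsingleton [Subsingleton V] [Fintype G.edgeSet] :
    #G.edgeFinset = 0 := by
  rw [Finset.card_eq_zero, SimpleGraph.edgeFinset_eq_empty]
  exact Subsingleton.elim _ _

theorem card_edgeFinset_eq_card_mul_averageDegree [Fintype V] [DecidableRel G.Adj] :
    (#G.edgeFinset : ℝ) = Fintype.card V * averageDegree G / 2 := by
  have h : ∑ v, (G.degree v : ℝ) = 2 * #G.edgeFinset := mod_cast G.sum_degrees_eq_twice_card_edges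
  rw [averageDegree, Fintype.card_mul_expect, h]
  ring

theorem card_edgeFinset_le_card_edgeFinset_induce_compl_add_degree [Fintype V] [DecidableEq V]
    [DecidableRel G.Adj] (v : V) :
    #G.edgeFinset ≤ #(G.induce {v}ᶜ).edgeFinset + G.degree v := by
  rw [G.card_edgeFinset_induce_compl_singleton, G.card_edgeFinset_deleteIncidenceSet]
  exact le_tsub_add

theorem CycleSparse.card_edgeFinset_le_of_two_le_degree [Fintype V] [Nonempty V]
    [DecidableRel G.Adj] (hk : 1 ≤ k) (hG : CycleSparse G k) (hdeg : ∀ v, 2 ≤ G.degree v) :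
    #G.edgeFinset ≤ cycleSparseBound k (Fintype.card V) := by
  obtain ⟨j, rfl⟩ := Nat.exists_eq_add_of_le' hk
  rw [card_edgeFinset_eq_card_mul_averageDegree]
  exact half_mul_le_cycleSparseBound (mod_cast Fintype.card_pos)
    (hG.averageDegree_mul_pow_le_card hdeg)

theorem turan_bound_cycles_general [Fintype V] [DecidableRel G.Adj] (hk : 1 ≤ k)
    (hG : CycleSparse G k) : #G.edgeFinset ≤ cycleSparseBound k (Fintype.card V) := by
  classical
  induction hn : Fintype.card V using Nat.strong_induction_on generalizing V with | _ n ih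
  subst hn
  rcases subsingleton_or_nontrivial V with _ | _
  · rw [card_edgeFinset_of_subsingleton, Nat.cast_zero]
    exact cycleSparseBound_nonneg hk (Nat.cast_nonneg _)
  by_cases! hdeg : ∀ v, 2 ≤ G.degree v
  · exact hG.card_edgeFinset_le_of_two_le_degree hk hdeg
  obtain ⟨v, hv⟩ := hdeg
  have hcard : Fintype.card ({v}ᶜ : Set V) + 1 = Fintype.card V := by
    rw [Fintype.card_compl_set, Set.card_singleton, Nat.sub_add_cancel Fintype.card_pos]
  have hrest : 1 ≤ Fintype.card ({v}ᶜ : Set V) := by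
    have := Fintype.one_lt_card (α := V)
    lia
  calc (#G.edgeFinset : ℝ) ≤ #(G.induce {v}ᶜ).edgeFinset + 1 := by
        have := card_edgeFinset_le_card_edgeFinset_induce_compl_add_degree (G := G) v
        exact_mod_cast (by lia : #G.edgeFinset ≤ #(G.induce {v}ᶜ).edgeFinset + 1)
    _ ≤ cycleSparseBound k (Fintype.card ({v}ᶜ : Set V)) + 1 := by
        gcongr
        exact ih _ (by lia) (hG.induce _) rfl
    _ ≤ cycleSparseBound k (Fintype.card V) := by
        rw [← hcard, Nat.cast_add_one]
        exact cycleSparseBound_add_one_le hk (mod_cast hrest)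

end EdgeBound

/-- Let `k ≥ 2` and `n ≥ 1`, and let `G` be a graph on `n` vertices containing no cycle
of length at most `k` and no even cycle of length at most `2k`.  Then
`e(G) ≤ (1/2) n^(1 + 1/k) + ((k - 1)/(2k)) n + n^(1 - 1/k)`. -/
theorem turan_bound_cycles (k n : ℕ) (hk : 2 ≤ k) (hn : 1 ≤ n)
    (G : SimpleGraph (Fin n))
    (hshort : ¬ ∃ (v : Fin n) (c : G.Walk v v), c.IsCycle ∧ c.length ≤ k)
    (heven : ¬ ∃ (v : Fin n) (c : G.Walk v v), c.IsCycle ∧ Even c.length ∧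
      c.length ≤ 2 * k) :
    (G.edgeSet.ncard : ℝ) ≤
      (1 / 2) * (n : ℝ) ^ ((1 : ℝ) + 1 / (k : ℝ))
        + (((k : ℝ) - 1) / (2 * (k : ℝ))) * (n : ℝ)
        + (n : ℝ) ^ ((1 : ℝ) - 1 / (k : ℝ)) := by
  classical
  have hG : CycleSparse G k :=
    ⟨fun hc ↦ not_le.1 fun hle ↦ hshort ⟨_, _, hc, hle⟩,
      fun hc he ↦ not_le.1 fun hle ↦ heven ⟨_, _, hc, he, hle⟩⟩
  simpa only [← ncard_coe_finset, SimpleGraph.coe_edgeFinset, Fintype.card_fin, cycleSparseBound]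
    using turan_bound_cycles_general (one_le_two.trans hk) hG
end
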